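/- arXiv:0807.0564 — 6 statements merged into one kernel-verified Lean document; each statement's English description precedes it below -/
import Mathlib

section
/- If (ḡ, p) ∈ Q and every coordinate of p is an integer, then there exists a valid configuration x ∈ B such that ḡ = Ξ̄(x) and p = p^x (the indicator vector of x); in particular every integral point of Q corresponds to a valid configuration. -/
/-!
A nonnegative integer vector with coordinate sum `1` is a standard unit vector
(`eq_indicator_of_sum_eq_one`), so each `p j` is concentrated on a single local word `c j ∈ Bj j`.
The marginal constraint then says that `g i` is the indicator of `c j i` for every `j` with
`i ∈ Ij j`; as `g i` does not depend on `j`, the local words agree on common coordinates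
and glue to a configuration `x`, which is defined everywhere because every `i` lies in some `Ij j`.
-/

open Finset

/-- A nonnegative integral vector whose coordinates sum to `1` is a standard unit vector. -/
theorem eq_indicator_of_sum_eq_one {β : Type*} [Fintype β] [DecidableEq β] (q : β → ℝ)
    (h0 : ∀ b, 0 ≤ q b) (h1 : ∑ b, q b = 1) (hint : ∀ b, ∃ z : ℤ, q b = z) :
    ∃ c, ∀ b, q b = if b = c then 1 else 0 := by
  obtain ⟨c, -, hc⟩ : ∃ c ∈ (Finset.univ : Finset β), q c ≠ 0 :=
    Finset.exists_ne_zero_of_sum_ne_zero (by rw [h1]; exact one_ne_zero)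
  have hc1 : 1 ≤ q c := by
    have hpos : 0 < q c := lt_of_le_of_ne (h0 c) hc.symm
    obtain ⟨z, hz⟩ := hint c
    rw [hz] at hpos ⊢
    exact_mod_cast hpos
  have hsplit := Finset.add_sum_erase Finset.univ q (Finset.mem_univ c)
  have hle : ∀ b, b ≠ c → q b ≤ ∑ b ∈ Finset.univ.erase c, q b := fun b hb =>
    Finset.single_le_sum (fun b _ => h0 b) (Finset.mem_erase.2 ⟨hb, Finset.mem_univ b⟩)
  have hnn : 0 ≤ ∑ b ∈ Finset.univ.erase c, q b := Finset.sum_nonneg fun b _ => h0 b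
  refine ⟨c, fun b => ?_⟩
  split_ifs with hb
  · subst hb
    linarith
  · linarith [h0 b, hle b hb]

/-- If `(ḡ, p) ∈ Q` and every coordinate of `p` is an integer,
then there exists a valid configuration `x ∈ B` such that `ḡ = Ξ̄(x)` and
`p = p^x` (the indicator vector of `x`); in particular every integral point of
`Q` corresponds to a valid configuration. -/
theorem stmt_9
    {I : Type} [Fintype I] [DecidableEq I]
    (A : I → Type) [∀ i, Fintype (A i)] [∀ i, DecidableEq (A i)]
    (hcard : ∀ i, 2 ≤ Fintype.card (A i))
    {L : Type} [Fintype L]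
    (Ij : L → Finset I) (hIj : ∀ j, (Ij j).Nonempty)
    (Bj : ∀ j : L, Finset (∀ i : Ij j, A i.1))
    -- every variable node is connected to at least one non-pendant factor node
    (hJ : ∀ i : I, ∃ j : L, i ∈ Ij j)
    (B : Set (∀ i, A i))
    (hB : B = {x | ∀ j : L, (fun i : Ij j => x i.1) ∈ Bj j})
    -- the mapping Ξ̄
    (Xibar : (∀ i, A i) → ∀ i : I, A i → ℝ)
    (hXibar : ∀ x (i : I) (γ : A i), Xibar x i γ = if γ = x i then 1 else 0)
    -- a point (ḡ, p) of Q
    (g : ∀ i : I, A i → ℝ)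
    (p : ∀ j : L, {b // b ∈ Bj j} → ℝ)
    (hp0 : ∀ j b, 0 ≤ p j b)
    (hp1 : ∀ j : L, ∑ b : Bj j, p j b = 1)
    (hg : ∀ (j : L) (i : I) (hij : i ∈ Ij j) (α : A i),
      g i α = ∑ b : Bj j, if b.1 ⟨i, hij⟩ = α then p j b else 0)
    -- every coordinate of p is an integer
    (hint : ∀ (j : L) (b : Bj j), ∃ z : ℤ, p j b = z) :
    ∃ x ∈ B, g = Xibar x ∧
      ∀ (j : L) (b : Bj j),
        p j b = if b.1 = (fun i : Ij j => x i.1) then 1 else 0 := by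
  classical
  choose c hc using fun j => eq_indicator_of_sum_eq_one (p j) (hp0 j) (hp1 j) (hint j)
  have hgc : ∀ (j : L) (i : I) (hij : i ∈ Ij j) (α : A i),
      g i α = if α = (c j).1 ⟨i, hij⟩ then 1 else 0 := by
    intro j i hij α
    rw [hg j i hij α, Finset.sum_eq_single (c j)]
    · simp [hc, eq_comm]
    · intro b _ hb
      simp [hc, hb]
    · simp
  choose k hk using hJ
  -- Gluing: the value at `i` is read off from an arbitrarily chosen factor `k i` containing `i`.
  let x : ∀ i, A i := fun i => (c (k i)).1 ⟨i, hk i⟩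
  have hx : ∀ j, (c j).1 = fun i : Ij j => x i.1 := by
    intro j
    funext i
    have h1 := hgc j i.1 i.2 ((c j).1 i)
    rw [if_pos rfl, hgc (k i.1) i.1 (hk i.1)] at h1
    by_contra hne
    rw [if_neg hne] at h1
    exact zero_ne_one h1
  refine ⟨x, ?_, ?_, ?_⟩
  · rw [hB]
    intro j
    rw [← hx j]
    exact (c j).2
  · funext i α
    rw [hXibar, hgc (k i) i (hk i) α]
  · intro j b
    rw [hc j b, ← hx j]
    simp only [Subtype.ext_iff]
end

section
/- (Optimum certificate property.) Suppose (ḡ*, p*) ∈ Q maximizes the cost λ·g over Q and all coordinates of (ḡ*, p*) are integers. Then ḡ* = Ξ̄(x*) for some x* ∈ B, and x* maximizes Σ_{i∈Y} log h_i(x_i) over all x ∈ B; that is, the integral LP output is the optimum configuration. -/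
/-!
A nonnegative integral vector with coordinate sum one is a unit vector, so each `pstar j` is
concentrated on a single local configuration `b j`
(`exists_eq_indicator_of_integral`). The marginal constraints then read
`gstar i α = [b j i = α]` for every factor `j` containing `i`; as the left side does not depend
on `j`, the `b j` agree on shared variables and glue to a configuration `xstar ∈ B` with
`gstar = Xibar xstar`. Conversely, every `x ∈ B` gives a point of `Q` with first component
`Xibar x`, whose cost is the objective value of `x`, so optimality over `Q` gives optimality
over `B`.
-/

open Finset

theorem exists_eq_indicator_of_integral {β : Type*} [Fintype β] [DecidableEq β] (p : β → ℝ)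
    (h0 : ∀ b, 0 ≤ p b) (h1 : ∑ b, p b = 1) (hint : ∀ b, ∃ z : ℤ, p b = z) :
    ∃ b, ∀ b', p b' = if b' = b then 1 else 0 := by
  obtain ⟨b, hb⟩ : ∃ b, p b ≠ 0 := by
    by_contra! hc
    simp [hc] at h1
  have hge : 1 ≤ p b := by
    obtain ⟨z, hz⟩ := hint b
    have h0b := h0 b
    rw [hz] at hb h0b ⊢
    have hz0 : z ≠ 0 := by exact_mod_cast hb
    have hz1 : 0 ≤ z := by exact_mod_cast h0b
    exact_mod_cast (by omega : 1 ≤ z)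
  have hsplit := Finset.add_sum_erase Finset.univ p (Finset.mem_univ b)
  have hnn : 0 ≤ ∑ c ∈ Finset.univ.erase b, p c := Finset.sum_nonneg fun c _ => h0 c
  refine ⟨b, fun b' => ?_⟩
  split_ifs with hbb
  · subst hbb
    linarith
  · have hle : p b' ≤ ∑ c ∈ Finset.univ.erase b, p c :=
      Finset.single_le_sum (fun c _ => h0 c) (by simp [hbb])
    linarith [h0 b']

/-- Optimum certificate property: Suppose `(ḡ*, p*) ∈ Q`
maximizes the cost `λ·g` over `Q` and all coordinates of `(ḡ*, p*)` are
integers. Then `ḡ* = Ξ̄(x*)` for some `x* ∈ B`, and `x*` maximizes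
`Σ_{i∈Y} log h_i(x_i)` over all `x ∈ B`; that is, the integral LP output is
the optimum configuration. -/
theorem stmt_10
    {I : Type} [Fintype I] [DecidableEq I]
    (A : I → Type) [∀ i, Fintype (A i)] [∀ i, DecidableEq (A i)]
    (hcard : ∀ i, 2 ≤ Fintype.card (A i))
    {L : Type} [Fintype L]
    (Ij : L → Finset I) (hIj : ∀ j, (Ij j).Nonempty)
    (Bj : ∀ j : L, Finset (∀ i : Ij j, A i.1))
    -- every variable node is connected to at least one non-pendant factor node
    (hJ : ∀ i : I, ∃ j : L, i ∈ Ij j)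
    (B : Set (∀ i, A i))
    (hB : B = {x | ∀ j : L, (fun i : Ij j => x i.1) ∈ Bj j})
    (hBne : B.Nonempty)
    (Y : Finset I)
    (h : ∀ i, A i → ℝ) (hpos : ∀ i ∈ Y, ∀ a, 0 < h i a)
    -- the mapping Ξ̄
    (Xibar : (∀ i, A i) → ∀ i : I, A i → ℝ)
    (hXibar : ∀ x (i : I) (γ : A i), Xibar x i γ = if γ = x i then 1 else 0)
    -- the polytope Q, as a set of pairs (ḡ, p)
    (Q : Set ((∀ i : I, A i → ℝ) × (∀ j : L, {b // b ∈ Bj j} → ℝ)))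
    (hQ : Q = {gp | (∀ j b, 0 ≤ gp.2 j b)
      ∧ (∀ j : L, ∑ b : Bj j, gp.2 j b = 1)
      ∧ (∀ (j : L) (i : I) (hij : i ∈ Ij j) (α : A i),
          gp.1 i α = ∑ b : Bj j, if b.1 ⟨i, hij⟩ = α then gp.2 j b else 0)})
    -- the cost functional λ·g
    (cost : (∀ i : I, A i → ℝ) → ℝ)
    (hcost : ∀ g, cost g = ∑ i ∈ Y, ∑ α : A i, Real.log (h i α) * g i α)
    -- the LP optimum (ḡ*, p*)
    (gstar : ∀ i : I, A i → ℝ)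
    (pstar : ∀ j : L, {b // b ∈ Bj j} → ℝ)
    (hmem : (gstar, pstar) ∈ Q)
    (hmax : ∀ gp ∈ Q, cost gp.1 ≤ cost gstar)
    -- all coordinates of (ḡ*, p*) are integers
    (hgint : ∀ (i : I) (α : A i), ∃ z : ℤ, gstar i α = z)
    (hpint : ∀ (j : L) (b : Bj j), ∃ z : ℤ, pstar j b = z) :
    ∃ xstar ∈ B, gstar = Xibar xstar ∧
      ∀ x ∈ B, (∑ i ∈ Y, Real.log (h i (x i)))
        ≤ ∑ i ∈ Y, Real.log (h i (xstar i)) := by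
  classical
  subst hB hQ
  obtain ⟨hp0, hp1, hmarg⟩ := hmem
  choose b hb using fun j =>
    exists_eq_indicator_of_integral (pstar j) (hp0 j) (hp1 j) (hpint j)
  have hg : ∀ (j : L) (i : I) (hij : i ∈ Ij j) (α : A i),
      gstar i α = if (b j).1 ⟨i, hij⟩ = α then 1 else 0 := by
    intro j i hij α
    have hm := hmarg j i hij α
    simp only [hb] at hm
    rw [hm, Finset.sum_eq_single (b j)]
    · simp
    · intro c _ hc
      simp [hc]
    · simp
  choose jj hjj using hJ
  let xs : ∀ i, A i := fun i => (b (jj i)).1 ⟨i, hjj i⟩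
  -- The value `gstar i (xs i) = 1` is shared by all factors containing `i`.
  have hglue : ∀ (j : L) (i : I) (hij : i ∈ Ij j), (b j).1 ⟨i, hij⟩ = xs i := by
    intro j i hij
    have e1 := hg j i hij (xs i)
    have e2 := hg (jj i) i (hjj i) (xs i)
    rw [if_pos rfl] at e2
    by_contra hne
    rw [if_neg hne, e2] at e1
    exact one_ne_zero e1
  have hgX : gstar = Xibar xs := by
    funext i α
    rw [hg (jj i) i (hjj i) α, hXibar]
    exact if_congr eq_comm rfl rfl
  have hcostX : ∀ x, cost (Xibar x) = ∑ i ∈ Y, Real.log (h i (x i)) := by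
    intro x
    simp [hcost, hXibar]
  refine ⟨xs, fun j => ?_, hgX, fun x hx => ?_⟩
  · have he : (fun i : Ij j => xs i.1) = (b j).1 := by
      funext i
      exact (hglue j i.1 i.2).symm
    rw [he]
    exact (b j).2
  · rw [← hcostX, ← hcostX, ← hgX]
    -- `Xibar x` extends to a point of `Q`: let `p j` be the indicator of `x` restricted to `Ij j`.
    refine hmax (Xibar x, fun j c => if c = ⟨_, hx j⟩ then 1 else 0) ⟨?_, ?_, ?_⟩
    · intro j c
      dsimp only
      split_ifs <;> norm_num
    · intro j
      simp
    · intro j i hij α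
      dsimp only
      rw [hXibar, Finset.sum_eq_single ⟨_, hx j⟩]
      · simp [eq_comm]
      · intro c _ hc
        simp [hc]
      · simp
end

section
/- (Theorem 1, equivalence of the two relaxed LPs.) For every (g̃, p) ∈ Q̃ with (ḡ, p) = V(g̃, p) ∈ Q, the costs satisfy λ̃·g̃ = λ·g − Σ_{i∈Y} log h_i(α_i); consequently (g̃*, p*) maximizes λ̃·g̃ over Q̃ if and only if V(g̃*, p*) maximizes λ·g over Q, and (g̃*, p*) is integral if and only if V(g̃*, p*) is integral. Hence the two linear programs produce the same output (configuration or failure). -/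
open Finset

/-!
In each factor `j` the marginals of `p j` at `i` over all symbols sum to `1`, so the marginal at the
omitted symbol `α₀ i` is one minus the sum of the others (`marginal_base`). Hence `V` maps `Q̃` into
`Q`, and every point of `Q` is the image under `V` of its restriction, which lies in `Q̃`. Expanding
`log (h i α / h i (α₀ i))` shows that the two costs differ by a constant along `V` (`cost_node`, one
variable node at a time), so maximizers correspond. Integrality transfers because the coordinates of
`V (g̃, p)` are integer combinations of `1` and those of `(g̃, p)`, and include all of the latter.
-/

/-- The marginal at a distinguished symbol `a₀` is determined by the others, for weights `p` of
total mass one. -/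
lemma marginal_base {B A : Type*} [Fintype B] [Fintype A] [DecidableEq A] (f : B → A) (p : B → ℝ)
    (hp : ∑ b, p b = 1) (a₀ : A) :
    (∑ b, if f b = a₀ then p b else 0) =
      1 - ∑ a : {a // a ≠ a₀}, ∑ b, if f b = a.1 then p b else 0 := by
  have h1 : ∑ a, ∑ b, (if f b = a then p b else 0) = 1 := by
    rw [Finset.sum_comm, ← hp]
    simp
  rw [Fintype.sum_eq_add_sum_subtype_ne _ a₀] at h1
  linarith

/-- The contribution of a single variable node to the cost relation. -/
lemma cost_node {A : Type*} [Fintype A] [DecidableEq A] (h : A → ℝ) (hpos : ∀ a, 0 < h a) (a₀ : A)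
    (g : A → ℝ) (gt : {a // a ≠ a₀} → ℝ) (h0 : g a₀ = 1 - ∑ a, gt a) (h1 : ∀ a, g a.1 = gt a) :
    ∑ a : {a // a ≠ a₀}, Real.log (h a.1 / h a₀) * gt a =
      ∑ a, Real.log (h a) * g a - Real.log (h a₀) := by
  rw [Fintype.sum_eq_add_sum_subtype_ne _ a₀, h0]
  simp only [h1, Real.log_div (hpos _).ne' (hpos _).ne', sub_mul, Finset.sum_sub_distrib,
    ← Finset.mul_sum]
  ring

lemma exists_int_sum {B : Type*} (s : Finset B) (f : B → ℝ) (hf : ∀ b ∈ s, ∃ z : ℤ, f b = z) :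
    ∃ z : ℤ, ∑ b ∈ s, f b = z := by
  choose! z hz using hf
  exact ⟨∑ b ∈ s, z b, by rw [Int.cast_sum]; exact Finset.sum_congr rfl hz⟩

/-- Theorem 1, equivalence of the two relaxed LPs: For every
`(g̃, p) ∈ Q̃` with `(ḡ, p) = V(g̃, p) ∈ Q`, the costs satisfy
`λ̃·g̃ = λ·g − Σ_{i∈Y} log h_i(α_i)`; consequently `(g̃*, p*)` maximizes `λ̃·g̃`
over `Q̃` if and only if `V(g̃*, p*)` maximizes `λ·g` over `Q`, and `(g̃*, p*)`
is integral if and only if `V(g̃*, p*)` is integral. Hence the two linear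
programs produce the same output (configuration or failure). -/
theorem stmt_11
    {I : Type} [Fintype I] [DecidableEq I]
    (A : I → Type) [∀ i, Fintype (A i)] [∀ i, DecidableEq (A i)]
    (hcard : ∀ i, 2 ≤ Fintype.card (A i))
    {L : Type} [Fintype L]
    (Ij : L → Finset I) (hIj : ∀ j, (Ij j).Nonempty)
    (Bj : ∀ j : L, Finset (∀ i : Ij j, A i.1)) (hBj : ∀ j, (Bj j).Nonempty)
    -- every variable node is connected to at least one non-pendant factor node
    (hJ : ∀ i : I, ∃ j : L, i ∈ Ij j)
    (Y : Finset I)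
    (h : ∀ i, A i → ℝ) (hpos : ∀ i ∈ Y, ∀ a, 0 < h i a)
    -- the distinguished elements α_i
    (α₀ : ∀ i, A i)
    -- the distinguished factor indices t_i ∈ J_i for i ∈ I\Y
    (t : I → L) (ht : ∀ i ∉ Y, i ∈ Ij (t i))
    -- the polytope Q̃, as a set of pairs (g̃, p)
    (Qt : Set ((∀ i : Y, {γ : A i.1 // γ ≠ α₀ i.1} → ℝ)
      × (∀ j : L, {b // b ∈ Bj j} → ℝ)))
    (hQt : Qt = {gp | (∀ j b, 0 ≤ gp.2 j b)
      ∧ (∀ j : L, ∑ b : Bj j, gp.2 j b = 1)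
      ∧ (∀ (i : I) (hiY : i ∈ Y) (j : L) (hij : i ∈ Ij j)
          (α : A i) (hα : α ≠ α₀ i),
          gp.1 ⟨i, hiY⟩ ⟨α, hα⟩ =
            ∑ b : Bj j, if b.1 ⟨i, hij⟩ = α then gp.2 j b else 0)
      ∧ (∀ (i : I) (hiY : i ∉ Y) (j : L) (hij : i ∈ Ij j), j ≠ t i →
          ∀ (α : A i), α ≠ α₀ i →
          (∑ b : Bj j, if b.1 ⟨i, hij⟩ = α then gp.2 j b else 0) =
            ∑ b : Bj (t i), if b.1 ⟨i, ht i hiY⟩ = α then gp.2 (t i) b else 0)})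
    -- the polytope Q, as a set of pairs (ḡ, p)
    (Q : Set ((∀ i : I, A i → ℝ) × (∀ j : L, {b // b ∈ Bj j} → ℝ)))
    (hQ : Q = {gp | (∀ j b, 0 ≤ gp.2 j b)
      ∧ (∀ j : L, ∑ b : Bj j, gp.2 j b = 1)
      ∧ (∀ (j : L) (i : I) (hij : i ∈ Ij j) (α : A i),
          gp.1 i α = ∑ b : Bj j, if b.1 ⟨i, hij⟩ = α then gp.2 j b else 0)})
    -- the map V
    (V : ((∀ i : Y, {γ : A i.1 // γ ≠ α₀ i.1} → ℝ)
        × (∀ j : L, {b // b ∈ Bj j} → ℝ))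
      → ((∀ i : I, A i → ℝ) × (∀ j : L, {b // b ∈ Bj j} → ℝ)))
    (hV2 : ∀ gp, (V gp).2 = gp.2)
    (hV1 : ∀ gp (i : I) (α : A i), (V gp).1 i α =
      if hiY : i ∈ Y then
        (if hα : α = α₀ i
          then 1 - ∑ β : {γ : A i // γ ≠ α₀ i}, gp.1 ⟨i, hiY⟩ β
          else gp.1 ⟨i, hiY⟩ ⟨α, hα⟩)
      else ∑ b : Bj (t i), if b.1 ⟨i, ht i hiY⟩ = α then gp.2 (t i) b else 0)
    -- the cost functionals
    (cost : (∀ i : I, A i → ℝ) → ℝ)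
    (hcost : ∀ g, cost g = ∑ i ∈ Y, ∑ α : A i, Real.log (h i α) * g i α)
    (costt : (∀ i : Y, {γ : A i.1 // γ ≠ α₀ i.1} → ℝ) → ℝ)
    (hcostt : ∀ gt, costt gt = ∑ i : Y, ∑ α : {γ : A i.1 // γ ≠ α₀ i.1},
      Real.log (h i.1 α.1 / h i.1 (α₀ i.1)) * gt i α) :
    -- cost relation on Q̃
    (∀ gp ∈ Qt, costt gp.1 = cost (V gp).1 - ∑ i ∈ Y, Real.log (h i (α₀ i)))
    -- equivalence of maximizers
    ∧ (∀ gp ∈ Qt,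
        ((∀ gp' ∈ Qt, costt gp'.1 ≤ costt gp.1) ↔
          (∀ gp' ∈ Q, cost gp'.1 ≤ cost (V gp).1)))
    -- equivalence of integrality
    ∧ (∀ gp ∈ Qt,
        (((∀ (i : Y) (α : {γ : A i.1 // γ ≠ α₀ i.1}), ∃ z : ℤ, gp.1 i α = z)
            ∧ ∀ (j : L) (b : Bj j), ∃ z : ℤ, gp.2 j b = z) ↔
          ((∀ (i : I) (α : A i), ∃ z : ℤ, (V gp).1 i α = z)
            ∧ ∀ (j : L) (b : Bj j), ∃ z : ℤ, (V gp).2 j b = z))) := by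
  have hVbase : ∀ gp (i : I) (hiY : i ∈ Y), (V gp).1 i (α₀ i) =
      1 - ∑ β : {γ : A i // γ ≠ α₀ i}, gp.1 ⟨i, hiY⟩ β := by
    intro gp i hiY
    rw [hV1, dif_pos hiY, dif_pos rfl]
  have hVne : ∀ gp (i : I) (hiY : i ∈ Y) (a : {γ : A i // γ ≠ α₀ i}), (V gp).1 i a.1 =
      gp.1 ⟨i, hiY⟩ a := by
    intro gp i hiY a
    rw [hV1, dif_pos hiY, dif_neg a.2]
  have hVout : ∀ gp (i : I) (hiY : i ∉ Y) (a : A i), (V gp).1 i a =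
      ∑ b : Bj (t i), if b.1 ⟨i, ht i hiY⟩ = a then gp.2 (t i) b else 0 := by
    intro gp i hiY a
    rw [hV1, dif_neg hiY]
  have hrel : ∀ gp, costt gp.1 = cost (V gp).1 - ∑ i ∈ Y, Real.log (h i (α₀ i)) := by
    intro gp
    rw [hcost, hcostt, ← Finset.sum_sub_distrib,
      ← Finset.sum_coe_sort Y (fun i => ∑ α : A i, Real.log (h i α) * (V gp).1 i α -
        Real.log (h i (α₀ i)))]
    refine Finset.sum_congr rfl fun i _ => ?_
    exact cost_node (h i.1) (hpos i.1 i.2) (α₀ i.1) _ _ (hVbase gp i.1 i.2) (hVne gp i.1 i.2)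
  have hVQ : ∀ gp ∈ Qt, V gp ∈ Q := by
    intro gp hgp
    rw [hQt] at hgp
    obtain ⟨hnn, hsum, hY, hnY⟩ := hgp
    rw [hQ]
    refine ⟨by rw [hV2]; exact hnn, by rw [hV2]; exact hsum, ?_⟩
    intro j i hij a
    rw [hV2]
    by_cases hiY : i ∈ Y
    · by_cases ha : a = α₀ i
      · subst ha
        rw [hVbase gp i hiY,
          marginal_base (fun b : Bj j => b.1 ⟨i, hij⟩) (gp.2 j) (hsum j) (α₀ i)]
        congr 1
        exact Finset.sum_congr rfl fun β _ => hY i hiY j hij β.1 β.2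
      · rw [hVne gp i hiY ⟨a, ha⟩]
        exact hY i hiY j hij a ha
    · rw [hVout gp i hiY]
      by_cases hj : j = t i
      · subst hj
        rfl
      · by_cases ha : a = α₀ i
        · subst ha
          rw [marginal_base (fun b : Bj j => b.1 ⟨i, hij⟩) (gp.2 j) (hsum j) (α₀ i),
            marginal_base (fun b : Bj (t i) => b.1 ⟨i, ht i hiY⟩) (gp.2 (t i)) (hsum _) (α₀ i)]
          congr 1
          exact Finset.sum_congr rfl fun β _ => (hnY i hiY j hij hj β.1 β.2).symm
        · exact (hnY i hiY j hij hj a ha).symm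
  -- The preimage of a point of `Q` keeps `p` and drops the coordinates outside `Y` or at `α₀`.
  have hsurj : ∀ gp ∈ Q, ∃ gp' ∈ Qt, (V gp').1 = gp.1 := by
    intro gp hgp
    rw [hQ] at hgp
    obtain ⟨hnn, hsum, hg⟩ := hgp
    refine ⟨(fun i a => gp.1 i.1 a.1, gp.2), ?_, ?_⟩
    · rw [hQt]
      refine ⟨hnn, hsum, fun i _ j hij a _ => hg j i hij a, fun i hiY j hij _ a _ => ?_⟩
      exact (hg j i hij a).symm.trans (hg (t i) i (ht i hiY) a)
    · funext i a
      by_cases hiY : i ∈ Y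
      · by_cases ha : a = α₀ i
        · subst ha
          obtain ⟨j, hij⟩ := hJ i
          rw [hVbase _ i hiY, hg j i hij,
            marginal_base (fun b : Bj j => b.1 ⟨i, hij⟩) (gp.2 j) (hsum j) (α₀ i)]
          congr 1
          exact Finset.sum_congr rfl fun β _ => hg j i hij β.1
        · exact hVne _ i hiY ⟨a, ha⟩
      · rw [hVout _ i hiY]
        exact (hg (t i) i (ht i hiY) a).symm
  refine ⟨fun gp _ => hrel gp, fun gp _ => ⟨fun H gp' hgp' => ?_, fun H gp' hgp' => ?_⟩,
    fun gp _ => ⟨fun ⟨H1, H2⟩ => ⟨fun i a => ?_, by rw [hV2]; exact H2⟩,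
      fun ⟨H1, H2⟩ => ⟨fun i a => ?_, by rw [hV2] at H2; exact H2⟩⟩⟩
  · obtain ⟨q, hq, hqe⟩ := hsurj gp' hgp'
    have := H q hq
    rw [hrel, hrel, hqe] at this
    linarith
  · have := H (V gp') (hVQ gp' hgp')
    rw [hrel, hrel]
    linarith
  · by_cases hiY : i ∈ Y
    · by_cases ha : a = α₀ i
      · subst ha
        rw [hVbase gp i hiY]
        obtain ⟨z, hz⟩ := exists_int_sum Finset.univ _ fun β _ => H1 ⟨i, hiY⟩ β
        exact ⟨1 - z, by rw [hz]; push_cast; rfl⟩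
      · rw [hVne gp i hiY ⟨a, ha⟩]
        exact H1 _ _
    · rw [hVout gp i hiY]
      refine exists_int_sum _ _ fun b _ => ?_
      split_ifs
      · exact H2 _ _
      · exact ⟨0, by simp⟩
  · rw [← hVne gp i.1 i.2 a]
    exact H1 _ _
end

section
/- (Theorem 2, forward direction.) Let M ≥ 1, let permutations Π_{j,i} of S = {1,…,M} be given for each j ∈ L, i ∈ I_j, and let x^{(M)} be a valid cover configuration of degree M (a graph-cover pseudoconfiguration). Define ḡ by g_i^{(α)} = |{l ∈ S : x_{i,l} = α}|/M for i ∈ I, α ∈ A_i, and p by p_{j,b} = |{l ∈ S : x_{j,l} = b}|/M for j ∈ L, b ∈ B_j. Then (ḡ, p) ∈ Q; that is, the normalized graph-cover pseudoconfiguration vector is an LP pseudoconfiguration. -/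
/-! The vector `p j` is the empirical distribution of the local configurations `x_{j,l}` as `l`
ranges over the `M` sheets of the cover, so for every `f` on `B_j` the weighted sum of `f` against
`p j` is the average of `f (x_{j,l})` over `l` (validity ensures that every sheet is counted).
Taking `f = 1` gives total mass one. Taking `f` to be the indicator of `b_i = α` gives the fraction
of `l` with `x_{i, Π_{j,i}(l)} = α`, which equals `g_i^{(α)}` because `Π_{j,i}` is a bijection. -/

open Finset

/-- Theorem 2, forward direction: Given a degree-`M` cover
(specified by permutations `Π_{j,i}` of `S = {1,…,M}`) and a valid cover
configuration `x^{(M)}` (a graph-cover pseudoconfiguration), the vectors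
`g_i^{(α)} = |{l ∈ S : x_{i,l} = α}|/M` and `p_{j,b} = |{l ∈ S : x_{j,l} = b}|/M`
satisfy `(ḡ, p) ∈ Q`; i.e., the normalized graph-cover pseudoconfiguration
vector is an LP pseudoconfiguration. -/
theorem stmt_12
    {I : Type} [Fintype I] [DecidableEq I]
    (A : I → Type) [∀ i, Fintype (A i)] [∀ i, DecidableEq (A i)]
    (hcard : ∀ i, 2 ≤ Fintype.card (A i))
    {L : Type} [Fintype L]
    (Ij : L → Finset I) (hIj : ∀ j, (Ij j).Nonempty)
    (Bj : ∀ j : L, Finset (∀ i : Ij j, A i.1))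
    -- the degree of the cover
    (M : ℕ) (hM : 0 < M)
    -- the permutations Π_{j,i}
    (Pm : ∀ j : L, ∀ i : Ij j, Equiv.Perm (Fin M))
    -- a cover configuration of degree M
    (x : ∀ i : I, Fin M → A i)
    -- validity: x_{j,l} ∈ B_j for all j ∈ L, l ∈ S
    (hvalid : ∀ (j : L) (l : Fin M),
      (fun i : Ij j => x i.1 (Pm j i l)) ∈ Bj j)
    -- the normalized graph-cover pseudoconfiguration vector ḡ
    (g : ∀ i : I, A i → ℝ)
    (hg : ∀ (i : I) (α : A i),
      g i α = ((univ.filter fun l : Fin M => x i l = α).card : ℝ) / M)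
    -- the associated p
    (p : ∀ j : L, {b // b ∈ Bj j} → ℝ)
    (hp : ∀ (j : L) (b : Bj j),
      p j b = ((univ.filter fun l : Fin M =>
        (fun i : Ij j => x i.1 (Pm j i l)) = b.1).card : ℝ) / M) :
    -- (ḡ, p) satisfies the defining constraints of Q
    (∀ (j : L) (b : Bj j), 0 ≤ p j b)
      ∧ (∀ j : L, ∑ b : Bj j, p j b = 1)
      ∧ (∀ (j : L) (i : I) (hij : i ∈ Ij j) (α : A i),
          g i α = ∑ b : Bj j, if b.1 ⟨i, hij⟩ = α then p j b else 0) := by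
  have hM0 : (M : ℝ) ≠ 0 := by exact_mod_cast hM.ne'
  have average : ∀ (j : L) (f : Bj j → ℝ),
      ∑ b : Bj j, f b * p j b = (∑ l : Fin M, f ⟨_, hvalid j l⟩) / M := by
    intro j f
    have hcount : ∀ b : Bj j, f b * p j b =
        (∑ l : Fin M, if (⟨_, hvalid j l⟩ : Bj j) = b then f b else 0) / M := by
      intro b
      simp only [hp, Subtype.ext_iff]
      rw [← Finset.sum_filter, Finset.sum_const, nsmul_eq_mul]
      ring
    simp only [hcount]
    rw [← Finset.sum_div, Finset.sum_comm]
    simp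
  refine ⟨fun j b => ?_, fun j => ?_, fun j i hij α => ?_⟩
  · rw [hp]
    positivity
  · have h := average j (fun _ => 1)
    simpa [hM0] using h
  · have h := average j (fun b => if b.1 ⟨i, hij⟩ = α then 1 else 0)
    simp only [ite_mul, one_mul, zero_mul] at h
    -- Reindexing the sheets by `Π_{j,i}` removes the permutation from the average.
    rw [h, Equiv.sum_comp (Pm j ⟨i, hij⟩) (fun l => if x i l = α then (1 : ℝ) else 0), hg]
    simp
end

section
/- (Theorem 2, reverse direction.) Let (ḡ, p) ∈ Q have all coordinates rational. Then there exist a positive integer M, permutations Π_{j,i} of S = {1,…,M} for each j ∈ L, i ∈ I_j, and a valid cover configuration x^{(M)} of degree M such that g_i^{(α)} = |{l ∈ S : x_{i,l} = α}|/M for all i ∈ I, α ∈ A_i, and p_{j,b} = |{l ∈ S : x_{j,l} = b}|/M for all j ∈ L, b ∈ B_j. Thus every rational LP pseudoconfiguration arises as the normalized vector of a graph-cover pseudoconfiguration. -/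
/-!
Clear denominators: choose `M > 0` such that every `p j b` is `n j b / M` with `n j b : ℕ`
(`exists_common_denominator`). Since `∑ b, n j b = M`, for each factor node `j` there is a list
`y j` of `M` local configurations in which `b` occurs exactly `n j b` times
(`exists_fun_card_fiber`). For a variable node `i`, the number of `l` with `(y j l)_i = α` is
`M * g i α`, which does not depend on the factor node `j` adjacent to `i`. So let `x i` be read off
from the list of one chosen adjacent factor node; for any other adjacent `j`, the sequences `x i`
and `l ↦ (y j l)_i` have the same value counts and therefore differ by a permutation of the indices
(`exists_perm_comp_eq`), which is taken as `Π_{j,i}`. Then `x_{j,l} = y j l`.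
-/

open Finset

lemma exists_common_denominator {K : Type*} [Fintype K] (p : K → ℝ) (hp0 : ∀ k, 0 ≤ p k)
    (hprat : ∀ k, ∃ q : ℚ, p k = q) :
    ∃ M : ℕ, 0 < M ∧ ∃ n : K → ℕ, ∀ k, p k = (n k : ℝ) / M := by
  choose q hq using hprat
  have hpos : 0 < ∏ k, (q k).den := Finset.prod_pos fun k _ => (q k).den_pos
  refine ⟨∏ k, (q k).den, hpos, ?_⟩
  have hdvd : ∀ k, ∃ c, ∏ k, (q k).den = (q k).den * c := fun k =>
    Finset.dvd_prod_of_mem (fun k => (q k).den) (mem_univ k)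
  choose c hc using hdvd
  refine ⟨fun k => (q k).num.toNat * c k, fun k => ?_⟩
  have hq0 : 0 ≤ q k := by
    have := hp0 k
    rw [hq k] at this
    exact_mod_cast this
  have hnum : (((q k).num.toNat : ℕ) : ℝ) = ((q k).num : ℝ) := by
    exact_mod_cast Int.toNat_of_nonneg (Rat.num_nonneg.mpr hq0)
  have hck : (c k : ℝ) ≠ 0 := by
    have : c k ≠ 0 := by
      rintro h
      have h2 := hc k
      rw [h, mul_zero] at h2
      omega
    exact_mod_cast this
  rw [hc k, hq k]
  push_cast
  rw [hnum, mul_div_mul_right _ _ hck]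
  exact_mod_cast (Rat.num_div_den (q k)).symm

/-- A sequence of length `M` with prescribed value counts `n` summing to `M`. -/
lemma exists_fun_card_fiber {β : Type*} [Fintype β] [DecidableEq β] (M : ℕ) (n : β → ℕ)
    (hn : ∑ b, n b = M) :
    ∃ y : Fin M → β, ∀ b, (univ.filter fun l => y l = b).card = n b := by
  have e : Fin M ≃ Σ b, Fin (n b) := Fintype.equivOfCardEq (by simp [hn])
  refine ⟨fun l => (e l).1, fun b => ?_⟩
  rw [← Fintype.card_subtype]
  have e2 : {l // (e l).1 = b} ≃ {s : Σ b, Fin (n b) // s.1 = b} :=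
    e.subtypeEquiv fun _ => Iff.rfl
  rw [Fintype.card_congr (e2.trans (Equiv.sigmaSubtype b)), Fintype.card_fin]

/-- Two functions with the same value counts agree up to a permutation of their domain. -/
lemma exists_perm_comp_eq {ι β : Type*} [Fintype ι] [DecidableEq β] (f h : ι → β)
    (hfh : ∀ b, (univ.filter fun l => f l = b).card = (univ.filter fun l => h l = b).card) :
    ∃ e : Equiv.Perm ι, ∀ l, f (e l) = h l := by
  have hE : ∀ b, Nonempty ({l // h l = b} ≃ {l // f l = b}) := fun b =>
    ⟨Fintype.equivOfCardEq (by rw [Fintype.card_subtype, Fintype.card_subtype, hfh b])⟩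
  have E := fun b => (hE b).some
  refine ⟨(Equiv.sigmaFiberEquiv h).symm.trans
    ((Equiv.sigmaCongrRight E).trans (Equiv.sigmaFiberEquiv f)), fun l => ?_⟩
  exact (E (h l) ⟨l, rfl⟩).2

/-- Theorem 2, reverse direction: Let `(ḡ, p) ∈ Q` have all
coordinates rational. Then there exist a positive integer `M`, permutations
`Π_{j,i}` of `S = {1,…,M}`, and a valid cover configuration `x^{(M)}` of degree
`M` such that `g_i^{(α)} = |{l ∈ S : x_{i,l} = α}|/M` for all `i, α` and
`p_{j,b} = |{l ∈ S : x_{j,l} = b}|/M` for all `j, b`. Thus every rational LP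
pseudoconfiguration arises as the normalized vector of a graph-cover
pseudoconfiguration. -/
theorem stmt_13
    {I : Type} [Fintype I] [DecidableEq I]
    (A : I → Type) [∀ i, Fintype (A i)] [∀ i, DecidableEq (A i)]
    (hcard : ∀ i, 2 ≤ Fintype.card (A i))
    {L : Type} [Fintype L]
    (Ij : L → Finset I) (hIj : ∀ j, (Ij j).Nonempty)
    (Bj : ∀ j : L, Finset (∀ i : Ij j, A i.1))
    -- every variable node is connected to at least one non-pendant factor node
    (hJ : ∀ i : I, ∃ j : L, i ∈ Ij j)
    -- a point (ḡ, p) of Q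
    (g : ∀ i : I, A i → ℝ)
    (p : ∀ j : L, {b // b ∈ Bj j} → ℝ)
    (hp0 : ∀ j b, 0 ≤ p j b)
    (hp1 : ∀ j : L, ∑ b : Bj j, p j b = 1)
    (hg : ∀ (j : L) (i : I) (hij : i ∈ Ij j) (α : A i),
      g i α = ∑ b : Bj j, if b.1 ⟨i, hij⟩ = α then p j b else 0)
    -- all coordinates are rational
    (hgrat : ∀ (i : I) (α : A i), ∃ q : ℚ, g i α = q)
    (hprat : ∀ (j : L) (b : Bj j), ∃ q : ℚ, p j b = q) :
    ∃ (M : ℕ), 0 < M ∧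
      ∃ (Pm : ∀ j : L, ∀ i : Ij j, Equiv.Perm (Fin M))
        (x : ∀ i : I, Fin M → A i),
        (∀ (j : L) (l : Fin M), (fun i : Ij j => x i.1 (Pm j i l)) ∈ Bj j)
        ∧ (∀ (i : I) (α : A i),
            g i α = ((univ.filter fun l : Fin M => x i l = α).card : ℝ) / M)
        ∧ (∀ (j : L) (b : Bj j),
            p j b = ((univ.filter fun l : Fin M =>
              (fun i : Ij j => x i.1 (Pm j i l)) = b.1).card : ℝ) / M) := by
  classical
  obtain ⟨M, hM, n, hn⟩ := exists_common_denominator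
    (fun k : Σ j : L, {b // b ∈ Bj j} => p k.1 k.2) (fun k => hp0 k.1 k.2)
    (fun k => hprat k.1 k.2)
  have hMR : (M : ℝ) ≠ 0 := by exact_mod_cast hM.ne'
  have hn' : ∀ j b, p j b = (n ⟨j, b⟩ : ℝ) / M := fun j b => hn ⟨j, b⟩
  have hsum : ∀ j, ∑ b : Bj j, n ⟨j, b⟩ = M := fun j => by
    have h := hp1 j
    simp only [hn', ← Finset.sum_div] at h
    rw [div_eq_one_iff_eq hMR] at h
    exact_mod_cast h
  choose y hy using fun j => exists_fun_card_fiber M (fun b : Bj j => n ⟨j, b⟩) (hsum j)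
  have hcount : ∀ (j : L) (i : I) (hij : i ∈ Ij j) (α : A i),
      g i α = ((univ.filter fun l => (y j l).1 ⟨i, hij⟩ = α).card : ℝ) / M := by
    intro j i hij α
    -- split the indices `l` according to the value `y j l = b`
    rw [hg j i hij α, Finset.card_eq_sum_card_fiberwise (f := y j) (t := univ)
      (fun _ _ => mem_coe.2 (mem_univ _)), Nat.cast_sum, Finset.sum_div]
    refine Finset.sum_congr rfl fun b _ => ?_
    rw [Finset.filter_filter]
    split_ifs with hb
    · rw [hn', ← hy j b]
      congr 3
      ext l
      simp only [mem_filter, mem_univ, true_and]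
      exact ⟨fun h => ⟨by rw [h, hb], h⟩, fun h => h.2⟩
    · rw [Finset.filter_false_of_mem]
      · simp
      · rintro l - ⟨h1, h2⟩
        exact hb (h2 ▸ h1)
  choose j₀ hj₀ using hJ
  have hperm : ∀ (j : L) (i : Ij j), ∃ e : Equiv.Perm (Fin M),
      ∀ l, (y (j₀ i.1) (e l)).1 ⟨i.1, hj₀ i.1⟩ = (y j l).1 i := by
    intro j i
    refine exists_perm_comp_eq (fun l => (y (j₀ i.1) l).1 ⟨i.1, hj₀ i.1⟩)
      (fun l => (y j l).1 i) fun α => ?_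
    have h := (hcount (j₀ i.1) i.1 (hj₀ i.1) α).symm.trans (hcount j i.1 i.2 α)
    rw [div_left_inj' hMR] at h
    exact_mod_cast h
  choose Pm hPm using hperm
  have hx : ∀ j l, (fun i : Ij j => (y (j₀ i.1) (Pm j i l)).1 ⟨i.1, hj₀ i.1⟩) = (y j l).1 :=
    fun j l => funext fun i => hPm j i l
  refine ⟨M, hM, Pm, fun i l => (y (j₀ i) l).1 ⟨i, hj₀ i⟩, fun j l => ?_,
    fun i α => hcount (j₀ i) i (hj₀ i) α, fun j b => ?_⟩
  · rw [hx]
    exact (y j l).2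
  · rw [hn', ← hy j b]
    congr 3
    ext l
    simp only [mem_filter, mem_univ, true_and]
    rw [hx, Subtype.ext_iff]
end

section
/- (Receiver output is the lowest-cost pseudoconfiguration.) Suppose (ḡ*, p*) ∈ Q maximizes the cost λ·g over Q. Then for every positive integer M, every choice of permutations Π_{j,i} of S = {1,…,M} (j ∈ L, i ∈ I_j), and every valid cover configuration x^{(M)} of degree M with normalized pseudoconfiguration vector ḡ' (g'_i^{(α)} = |{l ∈ S : x_{i,l} = α}|/M), one has λ·g* ≥ λ·g'. -/
/-!
A valid cover configuration yields a point of `Q`: let `p j b` be the fraction of sheets `l` on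
which the local configuration at `j` equals `b`. These fractions are nonnegative and sum to `1`.
The marginal of `p j` at `(i, α)` is the fraction of sheets `l` with `x i (Π_{j,i} l) = α`, which
equals `g' i α` because `Π_{j,i}` is a bijection. Hence `(g', p) ∈ Q`, and maximality of `gstar`
applies.
-/

open Finset

/-- Receiver output is the lowest-cost pseudoconfiguration:
Suppose `(ḡ*, p*) ∈ Q` maximizes the cost `λ·g` over `Q`. Then for every
positive integer `M`, every choice of permutations `Π_{j,i}` of `S = {1,…,M}`,
and every valid cover configuration `x^{(M)}` of degree `M` with normalized
pseudoconfiguration vector `ḡ'`, one has `λ·g* ≥ λ·g'`. -/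
theorem stmt_14
    {I : Type} [Fintype I] [DecidableEq I]
    (A : I → Type) [∀ i, Fintype (A i)] [∀ i, DecidableEq (A i)]
    (hcard : ∀ i, 2 ≤ Fintype.card (A i))
    {L : Type} [Fintype L]
    (Ij : L → Finset I) (hIj : ∀ j, (Ij j).Nonempty)
    (Bj : ∀ j : L, Finset (∀ i : Ij j, A i.1))
    (Y : Finset I)
    (h : ∀ i, A i → ℝ) (hpos : ∀ i ∈ Y, ∀ a, 0 < h i a)
    -- the polytope Q, as a set of pairs (ḡ, p)
    (Q : Set ((∀ i : I, A i → ℝ) × (∀ j : L, {b // b ∈ Bj j} → ℝ)))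
    (hQ : Q = {gp | (∀ j b, 0 ≤ gp.2 j b)
      ∧ (∀ j : L, ∑ b : Bj j, gp.2 j b = 1)
      ∧ (∀ (j : L) (i : I) (hij : i ∈ Ij j) (α : A i),
          gp.1 i α = ∑ b : Bj j, if b.1 ⟨i, hij⟩ = α then gp.2 j b else 0)})
    -- the cost functional λ·g
    (cost : (∀ i : I, A i → ℝ) → ℝ)
    (hcost : ∀ g, cost g = ∑ i ∈ Y, ∑ α : A i, Real.log (h i α) * g i α)
    -- the LP optimum (ḡ*, p*)
    (gstar : ∀ i : I, A i → ℝ)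
    (pstar : ∀ j : L, {b // b ∈ Bj j} → ℝ)
    (hmem : (gstar, pstar) ∈ Q)
    (hmax : ∀ gp ∈ Q, cost gp.1 ≤ cost gstar) :
    ∀ (M : ℕ), 0 < M →
      ∀ (Pm : ∀ j : L, ∀ i : Ij j, Equiv.Perm (Fin M))
        (x : ∀ i : I, Fin M → A i),
        (∀ (j : L) (l : Fin M), (fun i : Ij j => x i.1 (Pm j i l)) ∈ Bj j) →
        ∀ (g' : ∀ i : I, A i → ℝ),
          (∀ (i : I) (α : A i),
            g' i α = ((univ.filter fun l : Fin M => x i l = α).card : ℝ) / M) →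
          cost g' ≤ cost gstar := by
  classical
  intro M hM Pm x hx g' hg'
  have hM0 : (M : ℝ) ≠ 0 := by exact_mod_cast hM.ne'
  let y : ∀ j : L, Fin M → {b // b ∈ Bj j} := fun j l => ⟨_, hx j l⟩
  let p : ∀ j : L, {b // b ∈ Bj j} → ℝ := fun j b => ∑ l : Fin M, if y j l = b then (M : ℝ)⁻¹ else 0
  refine hmax (g', p) ?_
  rw [hQ]
  refine ⟨fun j b => ?_, fun j => ?_, fun j i hij α => ?_⟩
  · change 0 ≤ ∑ l : Fin M, if y j l = b then (M : ℝ)⁻¹ else 0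
    exact Finset.sum_nonneg fun l _ => by split_ifs <;> positivity
  · simp only [p]
    rw [Finset.sum_comm]
    simp [hM0]
  · have hmarg : ∑ b : Bj j, (if b.1 ⟨i, hij⟩ = α then p j b else 0)
        = ∑ l : Fin M, if x i (Pm j ⟨i, hij⟩ l) = α then (M : ℝ)⁻¹ else 0 := by
      simp only [p, ← Finset.sum_filter (fun b : Bj j => b.1 ⟨i, hij⟩ = α)]
      rw [Finset.sum_comm]
      refine Finset.sum_congr rfl fun l _ => ?_
      rw [Finset.sum_ite_eq]
      simp [y]
    change g' i α = ∑ b : Bj j, (if b.1 ⟨i, hij⟩ = α then p j b else 0)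
    -- reindexing the sheets by the permutation removes it from the count
    rw [hmarg, Equiv.sum_comp (Pm j ⟨i, hij⟩) (fun l => if x i l = α then (M : ℝ)⁻¹ else 0), hg',
      ← Finset.sum_filter, Finset.sum_const, nsmul_eq_mul, div_eq_mul_inv]
end
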